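/- Let n ≥ 2, let q be the Lorentzian quadratic form q(x) = 2x₁x_{n+1} + x₂² + ⋯ + xₙ² on ℝ^{n+1}, and let ρ be a continuous representation of O(1,n) on a finite-dimensional real normed vector space V. Let 𝒢 be a subset of O(1,n), let E ⊆ ℝ^{n+1} be the linear span of all limit directions of 𝒢, and assume dim E ≥ 3. Then every vector v₀ ∈ V that is stable under 𝒢 is fixed by SO°(E), i.e. ρ(g)v₀ = v₀ for every g in the identity component of the subgroup {g ∈ O(1,n) : g(E) = E and g(x) = x for every x orthogonal to E}. (This subgroup is a copy of SO°(1, dim E − 1) inside O(1,n).) -/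

import Mathlib

open Matrix Filter Topology Bornology

noncomputable section

/-- The Lorentzian quadratic form `q(x) = 2 x₁ x_{n+1} + x₂² + ⋯ + xₙ²` on `ℝ^{n+1}`
(coordinates indexed by `Fin (n+1)`, so `x₁` is `x 0` and `x_{n+1}` is `x (Fin.last n)`). -/
def lorQ (n : ℕ) (x : Fin (n + 1) → ℝ) : ℝ :=
  2 * x 0 * x (Fin.last n) +
    ∑ i : Fin (n + 1), if i ≠ 0 ∧ i ≠ Fin.last n then x i ^ 2 else 0

/-- The polar bilinear form `B` of `lorQ`. -/
def lorB (n : ℕ) (x y : Fin (n + 1) → ℝ) : ℝ :=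
  x 0 * y (Fin.last n) + x (Fin.last n) * y 0 +
    ∑ i : Fin (n + 1), if i ≠ 0 ∧ i ≠ Fin.last n then x i * y i else 0

/-- The Lorentz group `O(1,n)`: linear automorphisms of `ℝ^{n+1}` preserving `lorQ`. -/
def LorentzGrp (n : ℕ) : Subgroup (GL (Fin (n + 1)) ℝ) where
  carrier := {g | ∀ x, lorQ n ((g : Matrix (Fin (n + 1)) (Fin (n + 1)) ℝ).mulVec x) = lorQ n x}
  one_mem' := by intro x; simp
  mul_mem' := by
    intro a b ha hb x
    have h : ((a * b : GL (Fin (n + 1)) ℝ) : Matrix (Fin (n + 1)) (Fin (n + 1)) ℝ).mulVec x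
        = (a : Matrix (Fin (n + 1)) (Fin (n + 1)) ℝ).mulVec
            ((b : Matrix (Fin (n + 1)) (Fin (n + 1)) ℝ).mulVec x) := by
      rw [Matrix.mulVec_mulVec]; rfl
    rw [h, ha, hb]
  inv_mem' := by
    intro g hg x
    have h : (g : Matrix (Fin (n + 1)) (Fin (n + 1)) ℝ).mulVec
        ((↑g⁻¹ : Matrix (Fin (n + 1)) (Fin (n + 1)) ℝ).mulVec x) = x := by
      rw [Matrix.mulVec_mulVec]
      have : (g : Matrix (Fin (n + 1)) (Fin (n + 1)) ℝ) * (↑g⁻¹ : Matrix (Fin (n + 1)) (Fin (n + 1)) ℝ)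
          = (1 : Matrix (Fin (n + 1)) (Fin (n + 1)) ℝ) := by
        rw [← Units.val_mul, mul_inv_cancel, Units.val_one]
      rw [this, Matrix.one_mulVec]
    calc lorQ n ((↑g⁻¹ : Matrix (Fin (n + 1)) (Fin (n + 1)) ℝ).mulVec x)
        = lorQ n ((g : Matrix (Fin (n + 1)) (Fin (n + 1)) ℝ).mulVec
            ((↑g⁻¹ : Matrix (Fin (n + 1)) (Fin (n + 1)) ℝ).mulVec x)) := (hg _).symm
      _ = lorQ n x := by rw [h]

/-- The action of an element of `O(1,n)` on a vector of `ℝ^{n+1}`. -/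
def lorAct {n : ℕ} (g : LorentzGrp n) (x : Fin (n + 1) → ℝ) : Fin (n + 1) → ℝ :=
  ((g : GL (Fin (n + 1)) ℝ) : Matrix (Fin (n + 1)) (Fin (n + 1)) ℝ).mulVec x

/-- The base point `o = e₁ − e_{n+1}`, a timelike vector. -/
def basePt (n : ℕ) : Fin (n + 1) → ℝ := fun i =>
  if i = 0 then 1 else if i = Fin.last n then -1 else 0

/-- `u` is a limit direction of a subset `G` of `O(1,n)`: `u` is nonzero lightlike, and some
sequence `λ_k • g_k⁻¹(o)`, with `g_k ∈ G`, converges to `u`. -/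
def IsLimitDirection (n : ℕ) (G : Set (LorentzGrp n)) (u : Fin (n + 1) → ℝ) : Prop :=
  u ≠ 0 ∧ lorQ n u = 0 ∧
    ∃ (g : ℕ → LorentzGrp n) (lam : ℕ → ℝ), (∀ k, g k ∈ G) ∧
      Tendsto (fun k => lam k • lorAct (g k)⁻¹ (basePt n)) atTop (𝓝 u)

/-- A vector `v` is stable under `G ⊆ O(1,n)` if its `ρ`-orbit under `G` is bounded. -/
def IsStableVec {n : ℕ} {V : Type*} [NormedAddCommGroup V] [NormedSpace ℝ V]
    (ρ : LorentzGrp n →* (V →L[ℝ] V)) (G : Set (LorentzGrp n)) (v : V) : Prop :=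
  IsBounded {w : V | ∃ g ∈ G, w = ρ g v}

/-- `SO°(E)`: the identity component of the subgroup of `O(1,n)` of elements leaving `E`
invariant and fixing pointwise every vector orthogonal to `E`. -/
def SOIdComp (n : ℕ) (E : Submodule ℝ (Fin (n + 1) → ℝ)) : Set (LorentzGrp n) :=
  connectedComponentIn
    {g : LorentzGrp n |
      E.map ((g : GL (Fin (n + 1)) ℝ) : Matrix (Fin (n + 1)) (Fin (n + 1)) ℝ).mulVecLin = E ∧
      ∀ x : Fin (n + 1) → ℝ, (∀ e ∈ E, lorB n x e = 0) → lorAct g x = x} 1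

/-!
Let `u`, `u'` be limit directions with `B u u' = 1` and let `c ↦ b(c)` be the boosts along them.
These rescale the infinitesimal Eichler transformations, so the representation sends the latter to
nilpotent endomorphisms and is polynomial on Eichler transformations. Since `b(r²)` is a product of
two Weyl elements, hence of Eichler transformations whose parameters are multiples of `r` and
`r⁻¹`, the vector `ρ (b(r²)) v₀` is a Laurent polynomial in `r`. The Iwasawa decomposition of the
points `g_k⁻¹ o` converging to `[u]` or to `[u']` turns stability of `v₀` into boundedness of this
Laurent polynomial at `0` and at `∞`. It is therefore constant, and the boosts fix `v₀`.

The velocities of these boosts are the wedges `u ∧ u'`, which span `Λ² E`. Let `S` be the group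
fixing the orthogonal of `E` and `H` the stabilizer of `v₀` in `S`. For `g ∈ S`, the endomorphism
`g - g⁻¹` is skew, so it lies in `Λ² E`, which consists of velocities of curves in `H`. By the
inverse function theorem, the `h - h⁻¹` with `h ∈ H` near `1` already fill a neighbourhood of `0`
in `Λ² E`. As `a ↦ a - a⁻¹` is injective near `1`, the group `H` contains a neighbourhood of `1` in
`S`, hence the identity component of `S`.
-/

section HyperbolicPlane

variable {K M : Type*} [Field K] [AddCommGroup M] [Module K M]
  {B : LinearMap.BilinForm K M} {u u' w : M}

/-- A hyperbolic pair for the bilinear form `B`: two null vectors with `B u u' = 1`. -/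
structure IsHyperbolicPair (B : LinearMap.BilinForm K M) (u u' : M) : Prop where
  left_null : B u u = 0
  right_null : B u' u' = 0
  pairing : B u u' = 1

/-- The boost with multiplier `c` along a hyperbolic pair: it multiplies `u` by `c` and `u'` by
`c⁻¹`, and fixes the vectors orthogonal to both. -/
def boostEnd (B : LinearMap.BilinForm K M) (u u' : M) (c : K) : Module.End K M :=
  1 + (c - 1) • (B u').smulRight u + (c⁻¹ - 1) • (B u).smulRight u'

/-- The Eichler transformation of the null vector `u'` and of `w ⟂ u'`: the unipotent isometry
that fixes `u'` and sends `y` to `y - B w y • u'` for `y ⟂ u'`. -/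
def eichlerEnd (B : LinearMap.BilinForm K M) (u' w : M) : Module.End K M :=
  1 + (B u').smulRight w - (B w).smulRight u' - (B w w / 2) • (B u').smulRight u'

/-- The element of `𝔰𝔬(B)` attached to the bivector `a ∧ b`. -/
def wedgeEnd (B : LinearMap.BilinForm K M) : M →ₗ[K] M →ₗ[K] Module.End K M :=
  (LinearMap.smulRightₗ ∘ₗ B).flip - LinearMap.smulRightₗ ∘ₗ B

lemma boostEnd_apply (c : K) (x : M) :
    boostEnd B u u' c x = x + ((c - 1) * B u' x) • u + ((c⁻¹ - 1) * B u x) • u' := by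
  simp [boostEnd, smul_smul]

lemma eichlerEnd_apply (x : M) :
    eichlerEnd B u' w x = x + B u' x • w - B w x • u' - (B w w / 2 * B u' x) • u' := by
  simp [eichlerEnd, smul_smul]

lemma wedgeEnd_apply (a b x : M) : wedgeEnd B a b x = B b x • a - B a x • b := by
  simp [wedgeEnd]

lemma IsHyperbolicPair.symm (hB : B.IsSymm) (h : IsHyperbolicPair B u u') :
    IsHyperbolicPair B u' u :=
  ⟨h.right_null, h.left_null, (hB.eq u' u).trans h.pairing⟩

lemma boostEnd_one : boostEnd B u u' 1 = 1 := by
  simp [boostEnd]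

lemma boostEnd_swap (c : K) : boostEnd B u' u c = boostEnd B u u' c⁻¹ := by
  simp only [boostEnd, inv_inv]
  abel

lemma boostEnd_mul (hB : B.IsSymm) (h : IsHyperbolicPair B u u') {c d : K} (hc : c ≠ 0)
    (hd : d ≠ 0) : boostEnd B u u' (c * d) = boostEnd B u u' c * boostEnd B u u' d := by
  ext x
  simp only [Module.End.mul_apply, boostEnd_apply, map_add, map_smul, h.left_null,
    h.right_null, h.pairing, (h.symm hB).pairing]
  match_scalars <;> field_simp <;> ring

lemma boostEnd_isometry (hB : B.IsSymm) (h : IsHyperbolicPair B u u') {c : K} (hc : c ≠ 0)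
    (x : M) : B (boostEnd B u u' c x) (boostEnd B u u' c x) = B x x := by
  simp only [boostEnd_apply, map_add, map_smul, LinearMap.add_apply, LinearMap.smul_apply,
    smul_eq_mul, h.left_null, h.right_null, h.pairing, (h.symm hB).pairing, ← hB.eq x u,
    ← hB.eq x u']
  field_simp
  ring

variable [NeZero (2 : K)]

lemma eichlerEnd_isometry (hB : B.IsSymm) (hu' : B u' u' = 0) (hw : B u' w = 0) (x : M) :
    B (eichlerEnd B u' w x) (eichlerEnd B u' w x) = B x x := by
  have hw' : B w u' = 0 := (hB.eq u' w).symm.trans hw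
  simp only [eichlerEnd_apply, map_add, map_sub, map_smul, LinearMap.add_apply,
    LinearMap.sub_apply, LinearMap.smul_apply, smul_eq_mul, hu', hw, hw', ← hB.eq x u',
    ← hB.eq x w]
  field_simp
  ring

lemma eichlerEnd_add (hB : B.IsSymm) {w₁ w₂ : M} (hu' : B u' u' = 0) (h₁ : B u' w₁ = 0)
    (h₂ : B u' w₂ = 0) :
    eichlerEnd B u' (w₁ + w₂) = eichlerEnd B u' w₁ * eichlerEnd B u' w₂ := by
  ext x
  have h₁' : B w₁ u' = 0 := (hB.eq u' w₁).symm.trans h₁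
  simp only [Module.End.mul_apply, eichlerEnd_apply, map_add, map_sub, map_smul,
    LinearMap.add_apply, hu', h₂, h₁', ← hB.eq w₂ w₁]
  match_scalars <;> field_simp <;> ring

lemma boostEnd_mul_eichlerEnd (hB : B.IsSymm) (h : IsHyperbolicPair B u u') (hw : B u w = 0)
    (hw' : B u' w = 0) {c : K} (hc : c ≠ 0) :
    boostEnd B u u' c * eichlerEnd B u' w = eichlerEnd B u' (c⁻¹ • w) * boostEnd B u u' c := by
  ext x
  have hwu : B w u = 0 := (hB.eq u w).symm.trans hw
  have hwu' : B w u' = 0 := (hB.eq u' w).symm.trans hw'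
  simp only [Module.End.mul_apply, eichlerEnd_apply, boostEnd_apply, map_add, map_sub, map_smul,
    LinearMap.smul_apply, smul_eq_mul, h.right_null, h.pairing,
    (h.symm hB).pairing, hw, hw', hwu, hwu']
  match_scalars <;> field_simp <;> ring

/-- A representative of the nontrivial Weyl group element of the `𝔰𝔩₂` spanned by the
infinitesimal Eichler transformations of `u'` and `u` along `w`; it swaps the lines of `u` and
`u'`. -/
def weylEnd (B : LinearMap.BilinForm K M) (u u' w : M) (r : K) : Module.End K M :=
  eichlerEnd B u' (r • w) * eichlerEnd B u ((2 / r) • w) * eichlerEnd B u' (r • w)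

lemma weylEnd_apply (hB : B.IsSymm) (h : IsHyperbolicPair B u u') (hw : B u w = 0)
    (hw' : B u' w = 0) (hww : B w w = 1) {r : K} (hr : r ≠ 0) (x : M) :
    weylEnd B u u' w r x = x - B u' x • (u + (r ^ 2 / 2) • u') - B u x • (u' + (2 / r ^ 2) • u)
      - (2 * B w x) • w := by
  have hwu : B w u = 0 := (hB.eq u w).symm.trans hw
  have hwu' : B w u' = 0 := (hB.eq u' w).symm.trans hw'
  simp only [weylEnd, Module.End.mul_apply, eichlerEnd_apply, map_add, map_sub, map_smul,
    LinearMap.smul_apply, smul_eq_mul, h.right_null, h.pairing,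
    (h.symm hB).pairing, hw, hw', hwu, hwu', hww]
  match_scalars <;> field_simp <;> ring

lemma boostEnd_sq_eq_weylEnd_mul_weylEnd (hB : B.IsSymm) (h : IsHyperbolicPair B u u')
    (hw : B u w = 0) (hw' : B u' w = 0) (hww : B w w = 1) {r : K} (hr : r ≠ 0) :
    boostEnd B u u' (r ^ 2) = weylEnd B u u' w 1 * weylEnd B u u' w r := by
  have hwu : B w u = 0 := (hB.eq u w).symm.trans hw
  have hwu' : B w u' = 0 := (hB.eq u' w).symm.trans hw'
  ext x
  simp only [Module.End.mul_apply, weylEnd_apply hB h hw hw' hww hr,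
    weylEnd_apply hB h hw hw' hww one_ne_zero, boostEnd_apply, map_add, map_sub, map_smul,
    smul_eq_mul, h.left_null, h.right_null, h.pairing, (h.symm hB).pairing, hw, hw', hwu, hwu',
    hww]
  match_scalars <;> field_simp <;> ring

/-- The Iwasawa decomposition of the timelike vector `x`. -/
lemma eichlerEnd_boostEnd_apply_sub (hB : B.IsSymm) (h : IsHyperbolicPair B u u') {x : M} {L : K}
    (hL : L ≠ 0) (hx : B x x = -2 * L ^ 2) (hux : B u' x ≠ 0) :
    eichlerEnd B u' ((B u' x)⁻¹ • (x - B u' x • u - B u x • u'))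
      (boostEnd B u u' (B u' x / L) (u - u')) = L⁻¹ • x := by
  simp only [eichlerEnd_apply, boostEnd_apply, map_add, map_sub, map_smul, LinearMap.smul_apply,
    LinearMap.sub_apply, smul_eq_mul, h.left_null, h.right_null, h.pairing, (h.symm hB).pairing,
    hB.eq x u, hB.eq x u', hx]
  match_scalars <;> field_simp <;> ring

end HyperbolicPlane

section SkewAdjoint

variable {K M : Type*} [Field K] [AddCommGroup M] [Module K M]
  [FiniteDimensional K M] {B : LinearMap.BilinForm K M}

lemma range_le_of_isSkewAdjoint (hB : B.IsSymm) (hnd : B.Nondegenerate) {E : Submodule K M}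
    {Y : Module.End K M} (hY : B.IsSkewAdjoint Y) (hYE : B.orthogonal E ≤ LinearMap.ker Y) :
    LinearMap.range Y ≤ E := by
  rintro - ⟨x, rfl⟩
  rw [← LinearMap.BilinForm.orthogonal_orthogonal hnd hB.isRefl E]
  intro y hy
  have hyx : B y (Y x) = -B (Y y) x := by
    rw [hY y x, Pi.neg_apply, map_neg, neg_neg]
  change B y (Y x) = 0
  rw [hyx, LinearMap.mem_ker.mp (hYE hy), map_zero,
    LinearMap.zero_apply, neg_zero]

/-- With `z j` representing the coordinate functionals of a basis `b` of `E`, skew-adjointness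
lets `2 • Y` be written as the sum of the wedges of `Y (z j)` and `b j`. -/
theorem mem_map₂_wedgeEnd_of_isSkewAdjoint [NeZero (2 : K)] (hB : B.IsSymm) (hnd : B.Nondegenerate)
    {E : Submodule K M} {Y : Module.End K M} (hY : B.IsSkewAdjoint Y)
    (hYE : B.orthogonal E ≤ LinearMap.ker Y) : Y ∈ Submodule.map₂ (wedgeEnd B) E E := by
  have hskew (x y : M) : B (Y x) y = -B x (Y y) := by
    rw [hY x y, Pi.neg_apply, map_neg]
  have hrange (x : M) : Y x ∈ E := range_le_of_isSkewAdjoint hB hnd hY hYE ⟨x, rfl⟩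
  let b := Module.finBasis K E
  obtain ⟨z, hz⟩ : ∃ z : Fin (Module.finrank K E) → M,
      ∀ x, Y x = ∑ j, B (z j) (Y x) • (b j : M) := by
    choose φ hφ using fun j => LinearMap.exists_extend (b.coord j)
    refine ⟨fun j => (B.toDual hnd).symm (φ j), fun x => ?_⟩
    have hcoord (j) : φ j (Y x) = b.repr ⟨Y x, hrange x⟩ j := by
      simpa using LinearMap.congr_fun (hφ j) ⟨Y x, hrange x⟩
    simp only [LinearMap.BilinForm.apply_toDual_symm_apply, hcoord]
    simpa only [map_sum, map_smul, Submodule.subtype_apply]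
      using congrArg E.subtype (b.sum_repr ⟨Y x, hrange x⟩).symm
  have hz' (x : M) : Y x = ∑ j, B (b j) x • Y (z j) := by
    refine (B.toDual hnd).injective (LinearMap.ext fun y => ?_)
    rw [B.toDual_def, B.toDual_def, hskew, hz y]
    simp only [map_sum, map_smul, LinearMap.sum_apply, LinearMap.smul_apply, smul_eq_mul, hskew,
      hB.eq x, neg_mul, Finset.sum_neg_distrib, mul_comm]
  have h2Y : (2 : K) • Y = ∑ j, wedgeEnd B (Y (z j)) (b j) := by
    ext x
    rw [two_smul, LinearMap.add_apply]
    nth_rewrite 1 [hz' x]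
    rw [hz x, ← Finset.sum_add_distrib, LinearMap.sum_apply]
    refine Finset.sum_congr rfl fun j _ => ?_
    rw [wedgeEnd_apply, hskew, sub_eq_add_neg, neg_smul, neg_neg]
  rw [← inv_smul_smul₀ (NeZero.ne (2 : K)) Y, h2Y]
  exact Submodule.smul_mem _ _ <| Submodule.sum_mem _ fun j _ =>
    Submodule.apply_mem_map₂ _ (hrange _) (b j).2

end SkewAdjoint

section Lorentzian

variable {M : Type*} [AddCommGroup M]

lemma wedgeEnd_eq_zero_of_not_linearIndependent {K : Type*} [Field K] [Module K M]
    {B : LinearMap.BilinForm K M} {a b : M} (h : ¬ LinearIndependent K ![a, b]) :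
    wedgeEnd B a b = 0 := by
  by_cases ha : a = 0
  · simp [ha]
  · rw [LinearIndependent.pair_iff' ha] at h
    push Not at h
    obtain ⟨c, rfl⟩ := h
    ext x
    rw [wedgeEnd_apply, map_smul, LinearMap.smul_apply, smul_assoc, smul_comm, sub_self,
      LinearMap.zero_apply]

variable {K : Type*} [Field K] [LinearOrder K] [Module K M] {B : LinearMap.BilinForm K M} {o : M}

/-- The form `B` is positive definite on the orthogonal complement of `o`. A nondegenerate form
with `B o o < 0` satisfying this is Lorentzian. -/
def IsPosDefOrthogonalTo (B : LinearMap.BilinForm K M) (o : M) : Prop :=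
  ∀ y, B o y = 0 → y ≠ 0 → 0 < B y y

lemma exists_pos_of_linearIndependent (hpos : IsPosDefOrthogonalTo B o) {x y : M}
    (hxy : LinearIndependent K ![x, y]) : ∃ a b : K, 0 < B (a • x + b • y) (a • x + b • y) := by
  by_cases hy : B o y = 0
  · exact ⟨0, 1, by simpa using hpos y hy (hxy.ne_zero 1)⟩
  · refine ⟨B o y, -B o x, hpos _ (by simp [mul_comm]) fun h => hy ?_⟩
    exact (LinearIndependent.pair_iff.mp hxy _ _ h).1

lemma wedgeEnd_eq_zero_of_null (hpos : IsPosDefOrthogonalTo B o) (hB : B.IsSymm)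
    {u v : M} (hu : B u u = 0) (hv : B v v = 0) (huv : B u v = 0) : wedgeEnd B u v = 0 := by
  refine wedgeEnd_eq_zero_of_not_linearIndependent fun hli => ?_
  obtain ⟨a, b, hab⟩ := exists_pos_of_linearIndependent hpos hli
  have hvu : B v u = 0 := (hB.eq v u).trans huv
  simp [hu, hv, huv, hvu] at hab

lemma pos_of_orthogonal_timelike [IsStrictOrderedRing K] (hpos : IsPosDefOrthogonalTo B o)
    (hB : B.IsSymm) {x z : M} (hz : B z z < 0) (hzx : B z x = 0) (hx : x ≠ 0) : 0 < B x x := by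
  have hli : LinearIndependent K ![z, x] := by
    refine LinearIndependent.pair_iff.mpr fun a b hab => ?_
    have ha : a = 0 := by
      have := congrArg (B z) hab
      simpa [hzx, hz.ne] using this
    subst ha
    simpa [hx] using hab
  obtain ⟨a, b, hab⟩ := exists_pos_of_linearIndependent hpos hli
  have hxz : B x z = 0 := (hB.eq x z).trans hzx
  have hval : B (a • z + b • x) (a • z + b • x) = a ^ 2 * B z z + b ^ 2 * B x x := by
    simp [hzx, hxz, pow_two, mul_assoc]
  have hbx : 0 < b ^ 2 * B x x := by
    linarith [mul_nonpos_of_nonneg_of_nonpos (sq_nonneg a) hz.le]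
  exact pos_of_mul_pos_right hbx (sq_nonneg b)

end Lorentzian

lemma exists_orthogonal_unit {M : Type*} [AddCommGroup M] [Module ℝ M] [FiniteDimensional ℝ M]
    {B : LinearMap.BilinForm ℝ M} {o : M}
    (hpos : IsPosDefOrthogonalTo B o) (hB : B.IsSymm)
    {u u' : M} (h : IsHyperbolicPair B u u') (hM : 2 < Module.finrank ℝ M) :
    ∃ w, B u w = 0 ∧ B u' w = 0 ∧ B w w = 1 := by
  obtain ⟨w, hw, hw0⟩ : ∃ w ∈ LinearMap.ker ((B u).prod (B u')), w ≠ 0 :=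
    Submodule.exists_mem_ne_zero_of_ne_bot (LinearMap.ker_ne_bot_of_finrank_lt (by simpa))
  obtain ⟨huw, hu'w⟩ : B u w = 0 ∧ B u' w = 0 := by simpa using hw
  have hww : 0 < B w w := by
    refine pos_of_orthogonal_timelike hpos hB (z := u - u') ?_ (by simp [huw, hu'w]) hw0
    simp [h.left_null, h.right_null, h.pairing, (h.symm hB).pairing]
  refine ⟨(√(B w w))⁻¹ • w, by simp [huw], by simp [hu'w], ?_⟩
  simp only [map_smul, LinearMap.smul_apply, smul_eq_mul]
  rw [← mul_assoc, ← mul_inv, Real.mul_self_sqrt hww.le, inv_mul_cancel₀ hww.ne']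

section Laurent

variable {K A : Type*} [Field K] [Ring A] [Algebra K A]

/-- Evaluation of a Laurent polynomial with coefficients in `A` at a unit `r` of the base field. -/
def laurentEval (r : Kˣ) : LaurentPolynomial A →+* A :=
  AddMonoidAlgebra.liftNCRingHom (RingHom.id A)
    ((algebraMap K A : K →* A).comp <| (Units.coeHom K).comp <| zpowersHom Kˣ r)
    fun a _ => (Algebra.commute_algebraMap_right _ a)

/-- The ring of Laurent polynomial functions `Kˣ → A`, with coefficients in `A`. -/
def laurentFunctions (K A : Type*) [Field K] [Ring A] [Algebra K A] : Subring (Kˣ → A) :=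
  (RingHom.pi (laurentEval (K := K) (A := A))).range

lemma laurentEval_single (r : Kˣ) (k : ℤ) (a : A) :
    laurentEval r (.single k a) = r ^ k • a := by
  refine (AddMonoidAlgebra.liftNCRingHom_single _ _ _ k a).trans ?_
  rw [Units.smul_def, Algebra.smul_def, Algebra.commutes]
  rfl

lemma zpow_smul_mem_laurentFunctions (k : ℤ) (a : A) :
    (fun r : Kˣ => r ^ k • a) ∈ laurentFunctions K A :=
  ⟨.single k a, funext fun r => laurentEval_single r k a⟩

lemma const_mem_laurentFunctions (a : A) : (fun _ : Kˣ => a) ∈ laurentFunctions K A := by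
  simpa using zpow_smul_mem_laurentFunctions (K := K) 0 a

lemma exists_sum_of_mem_laurentFunctions {F : Kˣ → A} (hF : F ∈ laurentFunctions K A) :
    ∃ (S : Finset ℤ) (c : ℤ → A), ∀ r, F r = ∑ k ∈ S, r ^ k • c k := by
  obtain ⟨p, rfl⟩ := hF
  refine ⟨p.coeff.support, p.coeff, fun r => ?_⟩
  change laurentEval r p = _
  conv_lhs => rw [← AddMonoidAlgebra.sum_coeff_single p]
  simp only [Finsupp.sum, map_sum, laurentEval_single]

variable [LinearOrder K] [IsStrictOrderedRing K]

lemma linearIndependent_zpow : LinearIndependent K fun (k : ℤ) (r : Kˣ) => ((r ^ k : Kˣ) : K) := by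
  refine (linearIndependent_monoidHom Kˣ K).comp
    (fun k : ℤ => (Units.coeHom K).comp (zpowGroupHom k)) fun k l hkl => ?_
  have h2 := DFunLike.congr_fun hkl (Units.mk0 2 two_ne_zero)
  simpa using h2

lemma eq_zero_of_sum_zpow_smul_eq_zero {M : Type*} [AddCommGroup M] [Module K M] {S : Finset ℤ}
    {a : ℤ → M} (h : ∀ r : Kˣ, ∑ k ∈ S, r ^ k • a k = 0) {k : ℤ} (hk : k ∈ S) : a k = 0 := by
  refine (Module.forall_dual_apply_eq_zero_iff K _).mp fun φ => ?_
  refine linearIndependent_iff'.mp (linearIndependent_zpow (K := K)) S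
    (fun k => φ (a k)) ?_ k hk
  funext r
  simpa [Units.smul_def, mul_comm] using congrArg φ (h r)

lemma laurent_coeff_mul_apply {F : Kˣ →* A} {S : Finset ℤ} {c : ℤ → A}
    (hF : ∀ r, F r = ∑ k ∈ S, r ^ k • c k) (s : Kˣ) {k : ℤ} (hk : k ∈ S) :
    c k * F s = s ^ k • c k := by
  refine sub_eq_zero.mp <|
    eq_zero_of_sum_zpow_smul_eq_zero (K := K) (a := fun k => c k * F s - s ^ k • c k)
      (fun r => ?_) hk
  calc ∑ k ∈ S, r ^ k • (c k * F s - s ^ k • c k)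
      = F r * F s - F (r * s) := by
        simp only [smul_sub, Finset.sum_sub_distrib, hF r, hF (r * s), Finset.sum_mul,
          smul_mul_assoc, mul_zpow, mul_smul]
    _ = 0 := by rw [map_mul, sub_self]

end Laurent

section OneParameterGroup

variable {A : Type*} [NormedRing A] [NormedAlgebra ℝ A]

lemma hasDerivAt_addChar {U : AddChar ℝ A} {N : A} (hN : HasDerivAt U N 0) (s : ℝ) :
    HasDerivAt U (N * U s) s := by
  have h : HasDerivAt (fun t => U (t - s) * U s) (N * U s) s :=
    (HasDerivAt.comp_sub_const s s (by rwa [sub_self])).mul_const _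
  simpa only [← AddChar.map_add_eq_mul, sub_add_cancel] using h

variable [CompleteSpace A]

lemma exists_isUnit_integral {U : ℝ → A} (hU : Continuous U) (h0 : U 0 = 1) :
    ∃ ε : ℝ, IsUnit (∫ t in (0)..ε, U t) := by
  have hderiv : HasDerivAt (fun ε : ℝ => ∫ t in (0)..ε, U t) 1 0 := by
    simpa [h0] using hU.integral_hasStrictDerivAt 0 0 |>.hasDerivAt
  have hslope : Tendsto (fun ε : ℝ => ε⁻¹ • ∫ t in (0)..ε, U t) (𝓝[≠] 0) (𝓝 1) := by
    simpa [hasDerivAt_iff_tendsto_slope_zero] using hderiv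
  obtain ⟨ε, hε, hε0⟩ := ((hslope.eventually (Units.isOpen.mem_nhds isUnit_one)).and
    self_mem_nhdsWithin).exists
  refine ⟨ε, ?_⟩
  rw [← smul_inv_smul₀ hε0 (∫ t in (0)..ε, U t)]
  exact hε.smul (Units.mk0 ε hε0)

/-- If `∫₀^ε U` is a unit, then `U s = (∫ₛ^{s+ε} U) (∫₀^ε U)⁻¹` is differentiable in `s`. -/
lemma exists_hasDerivAt_addChar {U : AddChar ℝ A} (hU : Continuous U) :
    ∃ N, HasDerivAt U N 0 := by
  obtain ⟨ε, J, hJ⟩ := exists_isUnit_integral hU U.map_zero_eq_one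
  have hUJ (s : ℝ) :
      U s = ((∫ t in (0)..(s + ε), U t) - ∫ t in (0)..s, U t) * (J⁻¹ : Aˣ) := by
    rw [intervalIntegral.integral_interval_sub_left (hU.intervalIntegrable _ _)
      (hU.intervalIntegrable _ _), Units.eq_mul_inv_iff_mul_eq, hJ]
    calc U s * ∫ t in (0)..ε, U t
        = ∫ t in (0)..ε, U s * U t :=
          ((ContinuousLinearMap.mul ℝ A (U s)).intervalIntegral_comp_comm
            (hU.intervalIntegrable 0 ε)).symm
      _ = ∫ t in s..(s + ε), U t := by
        simp only [← AddChar.map_add_eq_mul, intervalIntegral.integral_comp_add_left, add_zero]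
  have hprim (s : ℝ) : HasDerivAt (fun s => ∫ t in (0)..s, U t) (U s) s :=
    (hU.integral_hasStrictDerivAt 0 s).hasDerivAt
  rw [funext hUJ]
  exact ⟨_, (((hprim (0 + ε)).comp_add_const 0 ε).sub (hprim 0)).mul_const _⟩

lemma addChar_eq_exp {U : AddChar ℝ A} {N : A} (hN : HasDerivAt U N 0) (s : ℝ) :
    U s = NormedSpace.exp (s • N) := by
  have hderiv (t : ℝ) : HasDerivAt (fun t : ℝ => NormedSpace.exp (t • N) * U (-t)) 0 t := by
    have h := (hasDerivAt_exp_smul_const (𝕂 := ℝ) N t).mul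
      ((hasDerivAt_addChar hN (-t)).scomp t (hasDerivAt_neg t))
    rwa [Function.comp_apply, neg_one_smul, mul_neg, mul_assoc, add_neg_cancel] at h
  have hconst : NormedSpace.exp (s • N) * U (-s) = 1 := by
    simpa using is_const_of_deriv_eq_zero (fun t => (hderiv t).differentiableAt)
      (fun t => (hderiv t).deriv) s 0
  rw [← mul_one (NormedSpace.exp (s • N)), ← U.map_zero_eq_one, ← neg_add_cancel s,
    AddChar.map_add_eq_mul, ← mul_assoc, hconst, one_mul]

lemma eq_of_forall_exp_smul_eq {M N : A}
    (h : ∀ s : ℝ, NormedSpace.exp (s • M) = NormedSpace.exp (s • N)) : M = N := by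
  have hM := hasDerivAt_exp_smul_const (𝕂 := ℝ) M 0
  rw [funext h] at hM
  simpa using hM.unique (hasDerivAt_exp_smul_const (𝕂 := ℝ) N 0)

end OneParameterGroup

section Nilpotent

lemma isNilpotent_of_conj_eq_smul {K A : Type*} [Field K] [Ring A] [Algebra K A]
    [FiniteDimensional K A] (d : Aˣ) {N : A} {c : K} (hc : Function.Injective fun j : ℕ => c ^ j)
    (h : d * N * (d⁻¹ : Aˣ) = c • N) : IsNilpotent N := by
  by_contra hN
  have hconj (j : ℕ) : d * N ^ j * (d⁻¹ : Aˣ) = c ^ j • N ^ j := by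
    rw [← smul_pow, ← h, Units.conj_pow]
  have hli : LinearIndependent K fun j : ℕ => N ^ j :=
    Module.End.eigenvectors_linearIndependent'
      (LinearMap.mulRight K (d⁻¹ : Aˣ).1 ∘ₗ LinearMap.mulLeft K d.1) _ hc _ fun j =>
        ⟨Module.End.mem_eigenspace_iff.mpr (hconj j), fun hj => hN ⟨j, hj⟩⟩
  exact not_finite_iff_infinite.mpr inferInstance hli.finite

variable {A : Type*} [NormedRing A] [NormedAlgebra ℝ A]

theorem exists_isNilpotent_eq_exp [FiniteDimensional ℝ A] {U : AddChar ℝ A}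
    (hU : Continuous U) (d : Aˣ) {c : ℝ} (hc : 1 < c)
    (hd : ∀ s, d * U s * (d⁻¹ : Aˣ) = U (c * s)) :
    ∃ N, IsNilpotent N ∧ ∀ s, U s = NormedSpace.exp (s • N) := by
  have : CompleteSpace A := FiniteDimensional.complete ℝ A
  obtain ⟨N, hN⟩ := exists_hasDerivAt_addChar hU
  refine ⟨N, isNilpotent_of_conj_eq_smul d (pow_right_injective₀ (by linarith) hc.ne') ?_,
    addChar_eq_exp hN⟩
  refine eq_of_forall_exp_smul_eq fun s => ?_
  rw [smul_smul, mul_comm s c, ← addChar_eq_exp hN, ← hd, addChar_eq_exp hN]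
  let := NormedAlgebra.restrictScalars ℚ ℝ A
  rw [← NormedSpace.exp_units_conj, mul_smul_comm, smul_mul_assoc]

lemma exp_smul_eq_sum_of_pow_eq_zero {N : A} {m : ℕ} (hN : N ^ m = 0) (s : ℝ) :
    NormedSpace.exp (s • N) = ∑ j ∈ Finset.range m, s ^ j • ((j.factorial : ℝ)⁻¹ • N ^ j) := by
  rw [congrFun (NormedSpace.exp_eq_tsum ℝ) (s • N), tsum_eq_sum (s := Finset.range m)]
  · exact Finset.sum_congr rfl fun j _ => by rw [smul_pow, smul_comm]
  · intro j hj
    rw [smul_pow, pow_eq_zero_of_le (by simpa using hj) hN, smul_zero, smul_zero]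

lemma exp_smul_mem_laurentFunctions {N : A} (hN : IsNilpotent N) (a : ℝ) (m : ℤ) :
    (fun r : ℝˣ => NormedSpace.exp ((a * (r ^ m : ℝˣ)) • N)) ∈ laurentFunctions ℝ A := by
  obtain ⟨k, hk⟩ := hN
  have hsum : (fun r : ℝˣ => NormedSpace.exp ((a * (r ^ m : ℝˣ)) • N)) =
      ∑ j ∈ Finset.range k, fun r : ℝˣ =>
        r ^ (m * j) • (a ^ j • (j.factorial : ℝ)⁻¹ • N ^ j) := by
    funext r
    rw [exp_smul_eq_sum_of_pow_eq_zero hk, Finset.sum_apply]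
    refine Finset.sum_congr rfl fun j _ => ?_
    rw [mul_pow, mul_comm, mul_smul, _root_.zpow_mul, zpow_natCast, Units.smul_def,
      Units.val_pow_eq_pow_val]
  rw [hsum]
  exact sum_mem fun j _ => zpow_smul_mem_laurentFunctions _ _

end Nilpotent

section BoundedAtZero

variable {V : Type*} [NormedAddCommGroup V] [NormedSpace ℝ V] {v : V}

/-- A weak form of boundedness of the operators `F r` at `v` as `r → 0`: there are `rₖ → 0` and
`vₖ → v` such that `F rₖ vₖ` stays bounded. It kills the components of `v` that the family `F`
scales by negative powers of `r`. -/
def IsBoundedAtZero (F : ℝˣ → V →L[ℝ] V) (v : V) : Prop :=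
  ∃ C : ℝ, (0, v) ∈ closure {p : ℝ × V | ∃ r : ℝˣ, (r : ℝ) = p.1 ∧ ‖F r p.2‖ ≤ C}

lemma IsBoundedAtZero.apply_eq_zero {F : ℝˣ → V →L[ℝ] V} (hF : IsBoundedAtZero F v)
    {c : V →L[ℝ] V} {k : ℤ} (hk : k < 0) (hc : ∀ r, c * F r = r ^ k • c) : c v = 0 := by
  obtain ⟨C, hC⟩ := hF
  obtain ⟨m, rfl⟩ : ∃ m : ℕ, k = -(m : ℤ) := ⟨k.natAbs, by omega⟩
  have hbound : {p : ℝ × V | ∃ r : ℝˣ, (r : ℝ) = p.1 ∧ ‖F r p.2‖ ≤ C} ⊆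
      {p | ‖c p.2‖ ≤ |p.1| ^ m * (‖c‖ * C)} := by
    rintro ⟨-, x⟩ ⟨r, rfl, hr⟩
    have hcx : c x = (r : ℝ) ^ m • c (F r x) := by
      have h : c (F r x) = (r ^ m)⁻¹ • c x := by
        simpa using DFunLike.congr_fun (hc r) x
      rw [h, ← Units.val_pow_eq_pow_val, ← Units.smul_def, smul_inv_smul]
    calc ‖c x‖ = |(r : ℝ)| ^ m * ‖c (F r x)‖ := by
          rw [hcx, norm_smul, norm_pow, Real.norm_eq_abs]
      _ ≤ |(r : ℝ)| ^ m * (‖c‖ * C) := by gcongr; exact c.le_opNorm_of_le hr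
  have hclosed : IsClosed {p : ℝ × V | ‖c p.2‖ ≤ |p.1| ^ m * (‖c‖ * C)} :=
    isClosed_le (by fun_prop) (by fun_prop)
  have hm : m ≠ 0 := by omega
  simpa [hm] using closure_minimal hbound hclosed hC

theorem apply_eq_self_of_isBoundedAtZero {F : ℝˣ →* V →L[ℝ] V}
    (hF : ⇑F ∈ laurentFunctions ℝ (V →L[ℝ] V)) (h₀ : IsBoundedAtZero F v)
    (h_inv : IsBoundedAtZero (fun r => F r⁻¹) v) (r : ℝˣ) : F r v = v := by
  obtain ⟨S, c, hc⟩ := exists_sum_of_mem_laurentFunctions hF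
  have hcoeff {k : ℤ} (hk : k ∈ S) (hk0 : k ≠ 0) : c k v = 0 := by
    have hck := fun s => laurent_coeff_mul_apply hc s hk
    rcases hk0.lt_or_gt with hneg | hpos
    · exact h₀.apply_eq_zero hneg hck
    · refine h_inv.apply_eq_zero (neg_neg_of_pos hpos) fun s => ?_
      rw [hck, _root_.inv_zpow']
  have hconst (r : ℝˣ) : F r v = F 1 v := by
    rw [hc, hc, _root_.sum_apply, _root_.sum_apply]
    refine Finset.sum_congr rfl fun k hk => ?_
    rcases eq_or_ne k 0 with rfl | hk0
    · rw [zpow_zero, zpow_zero]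
    · rw [_root_.smul_apply, _root_.smul_apply, hcoeff hk hk0, smul_zero, smul_zero]
  rw [hconst, map_one, one_apply_eq_self]

end BoundedAtZero

section LorentzForm

lemma bilinForm_apply_apply_of_isometry {K M : Type*} [Field K] [NeZero (2 : K)] [AddCommGroup M]
    [Module K M] {B : LinearMap.BilinForm K M} (hB : B.IsSymm) {f : Module.End K M}
    (hf : ∀ x, B (f x) (f x) = B x x) (x y : M) : B (f x) (f y) = B x y := by
  have h := hf (x + y)
  simp only [map_add, LinearMap.add_apply, hf, hB.eq (f y) (f x), hB.eq y x] at h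
  refine mul_left_cancel₀ (two_ne_zero' K) ?_
  linear_combination h

variable {n : ℕ}

/-- The polar form `lorB n` of `lorQ n` as a bundled bilinear form; its matrix is that of the
transposition exchanging the first and last coordinates. -/
def lorentzForm (n : ℕ) : LinearMap.BilinForm ℝ (Fin (n + 1) → ℝ) :=
  Matrix.toBilin' ((Equiv.swap 0 (Fin.last n)).permMatrix ℝ)

lemma isSymm_lorentzForm : (lorentzForm n).IsSymm := by
  refine ⟨fun x y => ?_⟩
  rw [lorentzForm, Matrix.toBilin'_apply', Matrix.toBilin'_apply', dotProduct_mulVec,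
    ← mulVec_transpose, transpose_permMatrix, Equiv.swap_inv, dotProduct_comm]

lemma nondegenerate_lorentzForm : (lorentzForm n).Nondegenerate := by
  refine LinearMap.BilinForm.nondegenerate_toBilin'_of_det_ne_zero' _ ?_
  simp

lemma continuous_lorentzForm {T : Type*} [TopologicalSpace T] {f g : T → Fin (n + 1) → ℝ}
    (hf : Continuous f) (hg : Continuous g) : Continuous fun t => lorentzForm n (f t) (g t) := by
  simp only [lorentzForm, Matrix.toBilin'_apply']
  fun_prop

lemma basePt_zero : basePt n 0 = 1 := if_pos rfl

variable [NeZero n]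

lemma sum_eq_zero_add_last_add_sum_ite {M : Type*} [AddCommMonoid M] (f : Fin (n + 1) → M) :
    ∑ i, f i = f 0 + f (Fin.last n) +
      ∑ i : Fin (n + 1), if i ≠ 0 ∧ i ≠ Fin.last n then f i else 0 := by
  have h0 : (0 : Fin (n + 1)) ≠ Fin.last n := (Fin.last_pos' (n := n)).ne
  rw [← Finset.sum_filter, ← Finset.sum_pair h0,
    ← Finset.sum_filter_add_sum_filter_not _ (fun i => i = 0 ∨ i = Fin.last n)]
  congr 1
  · congr 1; ext i; simp
  · simp

lemma lorentzForm_apply (x y : Fin (n + 1) → ℝ) : lorentzForm n x y = lorB n x y := by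
  rw [lorentzForm, Matrix.toBilin'_apply', Matrix.permMatrix_mulVec, dotProduct,
    sum_eq_zero_add_last_add_sum_ite, lorB]
  simp only [Function.comp_apply, Equiv.swap_apply_left, Equiv.swap_apply_right]
  congr 1
  refine Finset.sum_congr rfl fun i _ => if_ctx_congr Iff.rfl (fun hi => ?_) fun _ => rfl
  rw [Equiv.swap_apply_of_ne_of_ne hi.1 hi.2]

lemma lorentzForm_self (x : Fin (n + 1) → ℝ) : lorentzForm n x x = lorQ n x := by
  rw [lorentzForm_apply, lorB, lorQ]
  ring_nf

lemma basePt_last : basePt n (Fin.last n) = -1 := by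
  rw [basePt, if_neg Fin.last_pos'.ne', if_pos rfl]

lemma lorentzForm_basePt (x : Fin (n + 1) → ℝ) :
    lorentzForm n (basePt n) x = x (Fin.last n) - x 0 := by
  have hsum : (∑ i, if i ≠ 0 ∧ i ≠ Fin.last n then basePt n i * x i else 0) = 0 :=
    Finset.sum_eq_zero fun i _ => by
      split_ifs with hi
      · rw [basePt, if_neg hi.1, if_neg hi.2, zero_mul]
      · rfl
  rw [lorentzForm_apply, lorB, hsum, basePt_zero, basePt_last]
  ring

lemma lorQ_add_sq (x : Fin (n + 1) → ℝ) :
    lorQ n x + lorentzForm n (basePt n) x ^ 2 = ∑ i, x i ^ 2 := by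
  rw [lorentzForm_basePt, sum_eq_zero_add_last_add_sum_ite, lorQ]
  ring

lemma lorQ_basePt : lorQ n (basePt n) = -2 := by
  rw [← lorentzForm_self, lorentzForm_basePt, basePt_zero, basePt_last]
  norm_num

lemma isPosDefOrthogonalTo_basePt : IsPosDefOrthogonalTo (lorentzForm n) (basePt n) := by
  intro x hx hx0
  obtain ⟨i, hi⟩ := Function.ne_iff.1 hx0
  have hsum : 0 < ∑ i, x i ^ 2 :=
    Finset.sum_pos' (fun i _ => sq_nonneg _) ⟨i, Finset.mem_univ i, sq_pos_of_ne_zero hi⟩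
  rwa [← lorQ_add_sq, hx, zero_pow two_ne_zero, add_zero, ← lorentzForm_self] at hsum

end LorentzForm

section LorentzGroup

variable {n : ℕ}

/-- The standard representation of `O(1,n)` on `ℝ^{n+1}`. -/
def stdRep (n : ℕ) : LorentzGrp n →* ((Fin (n + 1) → ℝ) →L[ℝ] (Fin (n + 1) → ℝ)) where
  toFun g := LinearMap.toContinuousLinearMap (Matrix.toLin' g.1.1)
  map_one' := by ext; simp
  map_mul' g h := by ext; simp

lemma stdRep_apply (g : LorentzGrp n) (x : Fin (n + 1) → ℝ) : stdRep n g x = lorAct g x := rfl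

open scoped Matrix.Norms.Operator in
lemma isEmbedding_stdRep : IsEmbedding (stdRep n) := by
  let e := ((Matrix.toLin' (R := ℝ) (m := Fin (n + 1)) (n := Fin (n + 1))).trans
    LinearMap.toContinuousLinearMap).toContinuousLinearEquiv
  exact e.toHomeomorph.isEmbedding.comp <| Units.isOpenEmbedding_val.isEmbedding.comp
    (IsEmbedding.subtypeVal (p := fun g => g ∈ LorentzGrp n))

variable [NeZero n]

lemma lorentzForm_lorAct (g : LorentzGrp n) (x y : Fin (n + 1) → ℝ) :
    lorentzForm n (lorAct g x) (lorAct g y) = lorentzForm n x y :=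
  bilinForm_apply_apply_of_isometry isSymm_lorentzForm (f := Matrix.toLin' g.1.1)
    (fun x => by rw [lorentzForm_self, lorentzForm_self]; exact g.2 x) x y

/-- The element of `O(1,n)` given by a linear endomorphism preserving the Lorentz form. -/
def ofIsometry (f : Module.End ℝ (Fin (n + 1) → ℝ))
    (hf : ∀ x, lorentzForm n (f x) (f x) = lorentzForm n x x) : LorentzGrp n :=
  have hker : LinearMap.ker f = ⊥ := (LinearMap.ker_eq_bot').2 fun x hx =>
    nondegenerate_lorentzForm.1 x fun y => by
      rw [← bilinForm_apply_apply_of_isometry isSymm_lorentzForm hf, hx, map_zero,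
        LinearMap.zero_apply]
  ⟨Units.map (LinearMap.toMatrixAlgEquiv' : _ ≃ₐ[ℝ] Matrix (Fin (n + 1)) (Fin (n + 1)) ℝ)
      (f.isUnit_iff_ker_eq_bot.2 hker).unit, fun x => by
    have h := hf x
    rwa [lorentzForm_self, lorentzForm_self, ← LinearMap.toMatrix'_mulVec f] at h⟩

lemma lorAct_ofIsometry {f : Module.End ℝ (Fin (n + 1) → ℝ)}
    (hf : ∀ x, lorentzForm n (f x) (f x) = lorentzForm n x x) (x : Fin (n + 1) → ℝ) :
    lorAct (ofIsometry f hf) x = f x :=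
  LinearMap.toMatrix'_mulVec f x

end LorentzGroup

section LorentzGroupTopology

variable {n : ℕ}

lemma lorentzGrp_ext {g g' : LorentzGrp n} (h : ∀ x, lorAct g x = lorAct g' x) : g = g' :=
  isEmbedding_stdRep.injective (ContinuousLinearMap.ext h)

lemma continuous_lorentzGrp_iff {T : Type*} [TopologicalSpace T] {f : T → LorentzGrp n} :
    Continuous f ↔ ∀ x, Continuous fun t => lorAct (f t) x := by
  rw [isEmbedding_stdRep.continuous_iff, continuous_clm_apply]
  rfl

lemma lorAct_one (x : Fin (n + 1) → ℝ) : lorAct (1 : LorentzGrp n) x = x :=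
  DFunLike.congr_fun (map_one (stdRep n)) x

lemma lorAct_mul (g g' : LorentzGrp n) (x : Fin (n + 1) → ℝ) :
    lorAct (g * g') x = lorAct g (lorAct g' x) :=
  DFunLike.congr_fun (map_mul (stdRep n) g g') x

variable [NeZero n]

lemma range_stdRep :
    Set.range (stdRep n) = {T | ∀ x, lorentzForm n (T x) (T x) = lorentzForm n x x} := by
  refine Set.Subset.antisymm ?_ fun T hT => ?_
  · rintro - ⟨g, rfl⟩ x
    exact lorentzForm_lorAct g x x
  · exact ⟨ofIsometry T hT, ContinuousLinearMap.ext (lorAct_ofIsometry hT)⟩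

lemma isClosedEmbedding_stdRep : IsClosedEmbedding (stdRep n) := by
  refine ⟨isEmbedding_stdRep, ?_⟩
  rw [range_stdRep, Set.ofPred_forall]
  refine isClosed_iInter fun x => isClosed_eq ?_ continuous_const
  have hx : Continuous fun T : (Fin (n + 1) → ℝ) →L[ℝ] (Fin (n + 1) → ℝ) => T x := by fun_prop
  exact continuous_lorentzForm hx hx

lemma isCompact_setOf_lorAct_mem_basePt (x : Fin (n + 1) → ℝ) :
    IsCompact {g : LorentzGrp n | lorAct g x ∈ ({basePt n, -basePt n} : Set _)} := by
  let S := {g : LorentzGrp n | lorAct g x ∈ ({basePt n, -basePt n} : Set _)}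
  have hbound (y : Fin (n + 1) → ℝ) : ∃ C, ∀ g : S, ‖stdRep n g y‖ ≤ C := by
    refine ⟨√(lorQ n y + lorentzForm n x y ^ 2), fun ⟨g, hg⟩ => ?_⟩
    have hpair : lorentzForm n x y ^ 2 = lorentzForm n (basePt n) (lorAct g y) ^ 2 := by
      rw [← lorentzForm_lorAct g x y]
      rcases hg with hg | hg <;> rw [hg]
      rw [map_neg, LinearMap.neg_apply, neg_sq]
    have hsum : ∑ i, lorAct g y i ^ 2 = lorQ n y + lorentzForm n x y ^ 2 := by
      rw [← lorQ_add_sq, hpair, ← lorentzForm_self, lorentzForm_lorAct, lorentzForm_self]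
    refine (pi_norm_le_iff_of_nonneg (Real.sqrt_nonneg _)).2 fun i => Real.abs_le_sqrt ?_
    rw [← hsum]
    exact Finset.single_le_sum (f := fun i => lorAct g y i ^ 2) (fun i _ => sq_nonneg _)
      (Finset.mem_univ i)
  obtain ⟨C, hC⟩ := banach_steinhaus hbound
  refine (isClosedEmbedding_stdRep.isCompact_preimage
    (isCompact_closedBall 0 C)).of_isClosed_subset ?_ fun g hg => ?_
  · exact (Set.toFinite _).isClosed.preimage (continuous_lorentzGrp_iff.1 continuous_id x)
  · exact mem_closedBall_zero_iff.2 (hC ⟨g, hg⟩)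

end LorentzGroupTopology

section Boost

variable {n : ℕ} [NeZero n] {u u' w : Fin (n + 1) → ℝ}

/-- The group of Lorentz boosts `u ↦ c u`, `u' ↦ c⁻¹ u'` in the plane of a hyperbolic pair. -/
def boost (h : IsHyperbolicPair (lorentzForm n) u u') : ℝˣ →* LorentzGrp n where
  toFun c := ofIsometry (boostEnd (lorentzForm n) u u' c)
    (boostEnd_isometry isSymm_lorentzForm h c.ne_zero)
  map_one' := lorentzGrp_ext fun x => by
    rw [lorAct_ofIsometry, Units.val_one, boostEnd_one, lorAct_one, Module.End.one_apply]
  map_mul' c d := lorentzGrp_ext fun x => by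
    simp only [lorAct_mul, lorAct_ofIsometry, Units.val_mul,
      boostEnd_mul isSymm_lorentzForm h c.ne_zero d.ne_zero, Module.End.mul_apply]

lemma lorAct_boost (h : IsHyperbolicPair (lorentzForm n) u u') (c : ℝˣ) (x : Fin (n + 1) → ℝ) :
    lorAct (boost h c) x = boostEnd (lorentzForm n) u u' c x :=
  lorAct_ofIsometry (boostEnd_isometry isSymm_lorentzForm h c.ne_zero) x

lemma boost_symm (h : IsHyperbolicPair (lorentzForm n) u u') (c : ℝˣ) :
    boost (h.symm isSymm_lorentzForm) c = boost h c⁻¹ :=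
  lorentzGrp_ext fun x => by
    rw [lorAct_boost, lorAct_boost, boostEnd_swap, Units.val_inv_eq_inv_val]

/-- The group of Eichler transformations (Siegel transvections) fixing the null vector `u'`. -/
def eichler (hu' : lorentzForm n u' u' = 0) :
    AddChar (LinearMap.ker (lorentzForm n u')) (LorentzGrp n) where
  toFun w := ofIsometry (eichlerEnd (lorentzForm n) u' w)
    (eichlerEnd_isometry isSymm_lorentzForm hu' w.2)
  map_zero_eq_one' := lorentzGrp_ext fun x => by
    rw [lorAct_ofIsometry, lorAct_one, eichlerEnd_apply]
    simp
  map_add_eq_mul' w₁ w₂ := lorentzGrp_ext fun x => by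
    simp only [lorAct_mul, lorAct_ofIsometry, Submodule.coe_add,
      eichlerEnd_add isSymm_lorentzForm hu' w₁.2 w₂.2, Module.End.mul_apply]

lemma lorAct_eichler (hu' : lorentzForm n u' u' = 0) (w : LinearMap.ker (lorentzForm n u'))
    (x : Fin (n + 1) → ℝ) :
    lorAct (eichler hu' w) x = eichlerEnd (lorentzForm n) u' w x :=
  lorAct_ofIsometry (eichlerEnd_isometry isSymm_lorentzForm hu' w.2) x

lemma continuous_eichler (hu' : lorentzForm n u' u' = 0) : Continuous (eichler hu') := by
  refine continuous_lorentzGrp_iff.2 fun x => ?_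
  have hw : Continuous fun w : LinearMap.ker (lorentzForm n u') => (w : Fin (n + 1) → ℝ) :=
    continuous_subtype_val
  have hwx := continuous_lorentzForm hw (continuous_const (y := x))
  have hww := continuous_lorentzForm hw hw
  simp only [lorAct_eichler, eichlerEnd_apply]
  fun_prop

lemma boost_mul_eichler_mul_inv (h : IsHyperbolicPair (lorentzForm n) u u')
    {w : LinearMap.ker (lorentzForm n u')} (hw : lorentzForm n u w = 0) (c : ℝˣ) :
    boost h c * eichler h.right_null w * (boost h c)⁻¹ =
      eichler h.right_null ((c⁻¹ : ℝˣ) • w) := by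
  rw [mul_inv_eq_iff_eq_mul]
  refine lorentzGrp_ext fun x => ?_
  have hcomm := boostEnd_mul_eichlerEnd isSymm_lorentzForm h hw w.2 c.ne_zero
  simpa [lorAct_mul, lorAct_boost, lorAct_eichler, Units.smul_def] using
    DFunLike.congr_fun hcomm x

end Boost

section LaurentRepresentation

variable {n : ℕ} [NeZero n] {u u' w : Fin (n + 1) → ℝ}

/-- An element of `O(1,n)` exchanging the lines of the hyperbolic pair `u, u'`, as a product of
three Eichler transformations; see `weylEnd`. -/
def weyl (h : IsHyperbolicPair (lorentzForm n) u u') (hw : lorentzForm n u w = 0)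
    (hw' : lorentzForm n u' w = 0) (r : ℝ) : LorentzGrp n :=
  eichler h.right_null (r • ⟨w, hw'⟩) * eichler h.left_null ((2 / r) • ⟨w, hw⟩) *
    eichler h.right_null (r • ⟨w, hw'⟩)

lemma boost_sq (h : IsHyperbolicPair (lorentzForm n) u u') (hw : lorentzForm n u w = 0)
    (hw' : lorentzForm n u' w = 0) (hww : lorentzForm n w w = 1) (r : ℝˣ) :
    boost h (r ^ 2) = weyl h hw hw' 1 * weyl h hw hw' r := by
  have lorAct_weyl (s : ℝ) (x : Fin (n + 1) → ℝ) :
      lorAct (weyl h hw hw' s) x = weylEnd (lorentzForm n) u u' w s x := by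
    simp only [weyl, weylEnd, lorAct_mul, lorAct_eichler, Submodule.coe_smul, Module.End.mul_apply]
  refine lorentzGrp_ext fun x => ?_
  rw [lorAct_boost, lorAct_mul, lorAct_weyl, lorAct_weyl, Units.val_pow_eq_pow_val,
    boostEnd_sq_eq_weylEnd_mul_weylEnd isSymm_lorentzForm h hw hw' hww r.ne_zero,
    Module.End.mul_apply]

variable {V : Type*} [NormedAddCommGroup V] [NormedSpace ℝ V] [FiniteDimensional ℝ V]
  {ρ : LorentzGrp n →* V →L[ℝ] V}

-- Boosts rescale an Eichler line, so its generator is nilpotent and `ρ` is polynomial on it.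
lemma map_eichler_mem_laurentFunctions (hρ : Continuous ρ)
    (h : IsHyperbolicPair (lorentzForm n) u u') {w : LinearMap.ker (lorentzForm n u')}
    (hw : lorentzForm n u w = 0) (a : ℝ) (m : ℤ) :
    (fun r : ℝˣ => ρ (eichler h.right_null ((a * (r ^ m : ℝˣ)) • w))) ∈
      laurentFunctions ℝ (V →L[ℝ] V) := by
  let U : AddChar ℝ (V →L[ℝ] V) := (ρ.compAddChar (eichler h.right_null)).compAddMonoidHom
    (LinearMap.toSpanSingleton ℝ _ w).toAddMonoidHom
  let c : ℝˣ := Units.mk0 2 two_ne_zero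
  have hU : Continuous U :=
    hρ.comp <| (continuous_eichler h.right_null).comp (continuous_id.smul continuous_const)
  have hconj (s : ℝ) : ρ.toHomUnits (boost h c⁻¹) * U s *
      ((ρ.toHomUnits (boost h c⁻¹))⁻¹ : (V →L[ℝ] V)ˣ) = U (2 * s) := by
    have hsw : lorentzForm n u (s • w : LinearMap.ker (lorentzForm n u')) = 0 := by
      rw [Submodule.coe_smul, map_smul, hw, smul_zero]
    have hboost := congrArg ρ (boost_mul_eichler_mul_inv h hsw c⁻¹)
    rwa [inv_inv, Units.smul_def, smul_smul, map_mul, map_mul] at hboost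
  obtain ⟨N, hN, hexp⟩ := exists_isNilpotent_eq_exp hU _ one_lt_two hconj
  have hUexp (r : ℝˣ) : ρ (eichler h.right_null ((a * (r ^ m : ℝˣ)) • w)) =
      NormedSpace.exp ((a * (r ^ m : ℝˣ)) • N) := hexp _
  simp only [hUexp]
  exact exp_smul_mem_laurentFunctions hN a m

lemma map_boost_sq_mem_laurentFunctions (hn : 2 ≤ n) (hρ : Continuous ρ)
    (h : IsHyperbolicPair (lorentzForm n) u u') :
    (fun r : ℝˣ => ρ (boost h (r ^ 2))) ∈ laurentFunctions ℝ (V →L[ℝ] V) := by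
  obtain ⟨w, hw, hw', hww⟩ := exists_orthogonal_unit isPosDefOrthogonalTo_basePt
    isSymm_lorentzForm h (by rw [Module.finrank_fin_fun]; omega)
  have hfactor (r : ℝˣ) : ρ (boost h (r ^ 2)) = ρ (weyl h hw hw' 1) *
      (ρ (eichler h.right_null (((1 : ℝ) * (r ^ (1 : ℤ) : ℝˣ)) • ⟨w, hw'⟩)) *
        ρ (eichler h.left_null (((2 : ℝ) * (r ^ (-1 : ℤ) : ℝˣ)) • ⟨w, hw⟩)) *
        ρ (eichler h.right_null (((1 : ℝ) * (r ^ (1 : ℤ) : ℝˣ)) • ⟨w, hw'⟩))) := by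
    simp [boost_sq h hw hw' hww, weyl, div_eq_mul_inv]
  simp only [hfactor]
  have h₁ := map_eichler_mem_laurentFunctions hρ h (w := ⟨w, hw'⟩) hw 1 1
  have h₂ := map_eichler_mem_laurentFunctions hρ (h.symm isSymm_lorentzForm) (w := ⟨w, hw⟩)
    hw' 2 (-1)
  exact mul_mem (const_mem_laurentFunctions _) (mul_mem (mul_mem h₁ h₂) h₁)

end LaurentRepresentation

section LimitDirection

variable {n : ℕ} {G : Set (LorentzGrp n)} {u u' : Fin (n + 1) → ℝ}

lemma IsLimitDirection.smul (h : IsLimitDirection n G u) {c : ℝ} (hc : c ≠ 0) :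
    IsLimitDirection n G (c • u) := by
  obtain ⟨hu, hq, g, l, hg, hl⟩ := h
  refine ⟨smul_ne_zero hc hu, ?_, g, fun k => c * l k, hg, ?_⟩
  · have hquad : lorQ n (c • u) = c ^ 2 * lorQ n u := by
      simp only [lorQ, Pi.smul_apply, smul_eq_mul, mul_pow, mul_add, Finset.mul_sum, mul_ite,
        mul_zero]
      ring
    rw [hquad, hq, mul_zero]
  · simpa only [mul_smul] using hl.const_smul c

/-- The cone over the orbit `{g⁻¹ o : g ∈ G}` of the base point. -/
def orbitCone (G : Set (LorentzGrp n)) : Set (Fin (n + 1) → ℝ) :=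
  {x | ∃ g ∈ G, ∃ l : ℝ, x = l • lorAct g⁻¹ (basePt n)}

lemma IsLimitDirection.mem_closure_orbitCone (h : IsLimitDirection n G u) :
    u ∈ closure (orbitCone G) := by
  obtain ⟨-, -, g, l, hg, hl⟩ := h
  exact mem_closure_of_tendsto hl <| .of_forall fun k => ⟨g k, hg k, l k, rfl⟩

/-- The parameter of the Eichler transformation in the Iwasawa decomposition of `x` with respect
to a hyperbolic pair. -/
def horoPart (h : IsHyperbolicPair (lorentzForm n) u u') (x : Fin (n + 1) → ℝ) :
    LinearMap.ker (lorentzForm n u') :=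
  ⟨(lorentzForm n u' x)⁻¹ • (x - lorentzForm n u' x • u - lorentzForm n u x • u'), by
    rw [LinearMap.mem_ker, map_smul, map_sub, map_sub, map_smul, map_smul, h.right_null,
      (h.symm isSymm_lorentzForm).pairing]
    simp⟩

/-- The multiplier of the boost in the Iwasawa decomposition of `x` with respect to a hyperbolic
pair `u, u'`. It does not depend on `u`. -/
def boostPart (u' x : Fin (n + 1) → ℝ) : ℝ :=
  √(lorentzForm n x x / -2) / lorentzForm n u' x

lemma boostPart_self (h : IsHyperbolicPair (lorentzForm n) u u') : boostPart u' u = 0 := by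
  simp [boostPart, h.left_null]

lemma continuousAt_boostPart (h : IsHyperbolicPair (lorentzForm n) u u') :
    ContinuousAt (boostPart u') u := by
  have hxx := continuous_lorentzForm (continuous_id (X := Fin (n + 1) → ℝ)) continuous_id
  have hux := continuous_lorentzForm (continuous_const (y := u')) continuous_id
  refine ContinuousAt.div ?_ hux.continuousAt ?_
  · exact (hxx.div_const _).sqrt.continuousAt
  · simp [(h.symm isSymm_lorentzForm).pairing]

lemma horoPart_self (h : IsHyperbolicPair (lorentzForm n) u u') : horoPart h u = 0 :=
  Subtype.ext <| by simp [horoPart, h.left_null, (h.symm isSymm_lorentzForm).pairing]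

lemma continuousAt_horoPart (h : IsHyperbolicPair (lorentzForm n) u u') :
    ContinuousAt (horoPart h) u := by
  have hux : ContinuousAt (fun x => lorentzForm n u x) u :=
    (continuous_lorentzForm continuous_const continuous_id).continuousAt
  have hu'x : ContinuousAt (fun x => lorentzForm n u' x) u :=
    (continuous_lorentzForm continuous_const continuous_id).continuousAt
  refine IsInducing.subtypeVal.continuousAt_iff.2 <| (hu'x.inv₀ ?_).smul <|
    (continuousAt_id.sub (hu'x.smul continuousAt_const)).sub (hux.smul continuousAt_const)
  simp [(h.symm isSymm_lorentzForm).pairing]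

variable [NeZero n]

lemma exists_boost_sq_mul_eichler_eq (h : IsHyperbolicPair (lorentzForm n) u u')
    {x : Fin (n + 1) → ℝ} (hx : x ∈ orbitCone G) (hpos : 0 < lorentzForm n u' x) :
    ∃ r : ℝˣ, r = √(boostPart u' x) ∧ ∃ g ∈ G, ∃ m : LorentzGrp n,
      lorAct m (u - u') ∈ ({basePt n, -basePt n} : Set _) ∧
        boost h (r ^ 2) * eichler h.right_null (-horoPart h x) = m⁻¹ * g := by
  obtain ⟨g, hg, l, hl⟩ := hx
  have hl0 : l ≠ 0 := by
    rintro rfl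
    simp [hl] at hpos
  have hxx : lorentzForm n x x = -2 * |l| ^ 2 := by
    rw [hl, map_smul, LinearMap.map_smul₂, lorentzForm_lorAct, lorentzForm_self, lorQ_basePt,
      sq_abs, smul_eq_mul, smul_eq_mul]
    ring
  have hboost : boostPart u' x = |l| / lorentzForm n u' x := by
    rw [boostPart, hxx, mul_div_cancel_left₀ _ (by norm_num), Real.sqrt_sq (abs_nonneg l)]
  have hboost_pos : 0 < boostPart u' x := hboost ▸ div_pos (abs_pos.2 hl0) hpos
  let r : ℝˣ := Units.mk0 (√(boostPart u' x)) (Real.sqrt_ne_zero'.2 hboost_pos)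
  have hr : (((r ^ 2)⁻¹ : ℝˣ) : ℝ) = lorentzForm n u' x / |l| := by
    rw [Units.val_inv_eq_inv_val, Units.val_pow_eq_pow_val, Units.val_mk0,
      Real.sq_sqrt hboost_pos.le, hboost, inv_div]
  refine ⟨r, rfl, g, hg, g * eichler h.right_null (horoPart h x) * boost h (r ^ 2)⁻¹, ?_, ?_⟩
  · have hiwasawa := eichlerEnd_boostEnd_apply_sub isSymm_lorentzForm h (abs_ne_zero.2 hl0) hxx
      hpos.ne'
    have hg_inv : lorAct g x = l • basePt n := by
      rw [hl, ← stdRep_apply, map_smul, stdRep_apply, ← lorAct_mul, mul_inv_cancel, lorAct_one]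
    rw [lorAct_mul, lorAct_mul, lorAct_boost, lorAct_eichler, hr, horoPart, hiwasawa,
      ← stdRep_apply, map_smul, stdRep_apply, hg_inv, smul_smul]
    rcases abs_choice l with habs | habs <;> simp [habs, hl0, inv_neg]
  · rw [map_inv, AddChar.map_neg_eq_inv]
    group

variable {V : Type*} [NormedAddCommGroup V] [NormedSpace ℝ V] {ρ : LorentzGrp n →* V →L[ℝ] V}
  {v : V}

theorem isBoundedAtZero_boost_sq (hρ : Continuous ρ) (h : IsHyperbolicPair (lorentzForm n) u u')
    (hu : IsLimitDirection n G u) (hv : IsStableVec ρ G v) :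
    IsBoundedAtZero (fun r => ρ (boost h (r ^ 2))) v := by
  obtain ⟨C₁, hC₁⟩ := hv.exists_norm_le
  obtain ⟨C₂, hC₂⟩ := ((isCompact_setOf_lorAct_mem_basePt (u - u')).image
    (hρ.comp continuous_inv)).isBounded.exists_norm_le
  let Φ (x : Fin (n + 1) → ℝ) : ℝ × V :=
    (√(boostPart u' x), ρ (eichler h.right_null (-horoPart h x)) v)
  have hΦu : Φ u = (0, v) := by
    simp [Φ, boostPart_self h, horoPart_self h]
  have hΦ : ContinuousAt Φ u := by
    refine (continuousAt_boostPart h).sqrt.prodMk <| ContinuousAt.clm_apply ?_ continuousAt_const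
    exact (hρ.comp (continuous_eichler h.right_null)).continuousAt.comp
      (continuousAt_horoPart h).neg
  have hopen : IsOpen {x | 0 < lorentzForm n u' x} :=
    isOpen_lt continuous_const (continuous_lorentzForm continuous_const continuous_id)
  have hclosure : u ∈ closure ({x | 0 < lorentzForm n u' x} ∩ orbitCone G) :=
    hopen.inter_closure ⟨by simp [(h.symm isSymm_lorentzForm).pairing], hu.mem_closure_orbitCone⟩
  refine ⟨C₂ * C₁, hΦu ▸ hΦ.continuousWithinAt.mem_closure hclosure fun x ⟨hpos, hx⟩ => ?_⟩
  obtain ⟨r, hr, g, hg, m, hm, heq⟩ := exists_boost_sq_mul_eichler_eq h hx hpos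
  refine ⟨r, hr, ?_⟩
  have hfactor : ρ (boost h (r ^ 2)) (Φ x).2 = ρ m⁻¹ (ρ g v) := by
    simpa only [map_mul, mul_apply_eq_comp] using congrArg (fun g => ρ g v) heq
  rw [hfactor]
  exact (ρ m⁻¹).le_of_opNorm_le_of_le (hC₂ _ ⟨m, hm, rfl⟩) (hC₁ _ ⟨g, hg, rfl⟩)

theorem map_boost_apply_eq_self [FiniteDimensional ℝ V] (hn : 2 ≤ n) (hρ : Continuous ρ)
    (h : IsHyperbolicPair (lorentzForm n) u u') (hu : IsLimitDirection n G u)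
    (hu' : IsLimitDirection n G u') (hv : IsStableVec ρ G v) {c : ℝ} (hc : 0 < c) :
    ρ (boost h (Units.mk0 c hc.ne')) v = v := by
  have hF := map_boost_sq_mem_laurentFunctions hn hρ h
  have h₀ := isBoundedAtZero_boost_sq hρ h hu hv
  have h_inv := isBoundedAtZero_boost_sq hρ (h.symm isSymm_lorentzForm) hu' hv
  simp only [boost_symm h, ← inv_pow] at h_inv
  have hc_sq : Units.mk0 c hc.ne' = Units.mk0 √c (Real.sqrt_ne_zero'.2 hc) ^ 2 := by
    ext
    simp [Real.sq_sqrt hc.le]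
  rw [hc_sq]
  exact apply_eq_self_of_isBoundedAtZero (F := ρ.comp ((boost h).comp (powMonoidHom 2))) hF h₀
    h_inv _

end LimitDirection

lemma ringInverse_map {Γ A : Type*} [Group Γ] [MonoidWithZero A] (τ : Γ →* A) (g : Γ) :
    Ring.inverse (τ g) = τ g⁻¹ :=
  (Ring.inverse_unit (τ.toHomUnits g)).trans (by rw [← map_inv]; rfl)

section TangentSpace

variable {Γ A : Type*} [Group Γ] [NormedRing A] [NormedAlgebra ℝ A]

/-- The tangent space at `1` of a subgroup `H` in a linear representation `τ`: the velocities at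
time `0` of the strictly differentiable curves in `H` issued from `1`. -/
def tangentSpace (τ : Γ →* A) (H : Subgroup Γ) : Submodule ℝ A where
  carrier := {X | ∃ γ : ℝ → Γ, γ 0 = 1 ∧ (∀ t, γ t ∈ H) ∧ HasStrictDerivAt (fun t => τ (γ t)) X 0}
  zero_mem' := ⟨fun _ => 1, rfl, fun _ => H.one_mem, hasStrictDerivAt_const _ _⟩
  add_mem' := by
    rintro X Y ⟨γ, hγ1, hγH, hγ⟩ ⟨δ, hδ1, hδH, hδ⟩
    refine ⟨fun t => γ t * δ t, by simp [hγ1, hδ1], fun t => H.mul_mem (hγH t) (hδH t), ?_⟩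
    simp only [map_mul]
    exact (hγ.mul hδ).congr_deriv (by simp [hγ1, hδ1])
  smul_mem' := by
    rintro c X ⟨γ, hγ1, hγH, hγ⟩
    refine ⟨fun t => γ (c * t), by simp [hγ1], fun t => hγH _, ?_⟩
    have hc : HasStrictDerivAt (fun t => c * t) c 0 := by
      simpa using (hasStrictDerivAt_id (0 : ℝ)).const_mul c
    exact HasStrictDerivAt.scomp (g₁ := fun t => τ (γ t)) 0 (by simpa using hγ) hc

theorem exists_hasStrictFDerivAt_subtypeL_tangentSpace [FiniteDimensional ℝ A] (τ : Γ →* A)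
    (H : Subgroup Γ) :
    ∃ Φ : tangentSpace τ H → Γ, Φ 0 = 1 ∧ (∀ X, Φ X ∈ H) ∧
      HasStrictFDerivAt (fun X => τ (Φ X)) (tangentSpace τ H).subtypeL 0 := by
  let b := Module.finBasis ℝ (tangentSpace τ H)
  let coord (i) : tangentSpace τ H →L[ℝ] ℝ := (b.coord i).toContinuousLinearMap
  choose γ hγ1 hγH hγ using fun i => (b i).2
  have hγi (i) : HasStrictFDerivAt (fun X => τ (γ i (coord i X)))
      ((coord i).smulRight (b i : A)) 0 := by
    have hγ0 : HasStrictDerivAt (fun t => τ (γ i t)) (b i : A) (coord i 0) := by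
      simpa only [map_zero] using hγ i
    exact (HasStrictFDerivAt.comp (g := fun t => τ (γ i t)) 0 hγ0.hasStrictFDerivAt
      (coord i).hasStrictFDerivAt).congr_fderiv (by ext; simp)
  have hprod (s : Finset (Fin (Module.finrank ℝ (tangentSpace τ H)))) :
      ∃ Φ : tangentSpace τ H → Γ, Φ 0 = 1 ∧ (∀ X, Φ X ∈ H) ∧
        HasStrictFDerivAt (fun X => τ (Φ X)) (∑ i ∈ s, (coord i).smulRight (b i : A)) 0 := by
    induction s using Finset.induction_on with
    | empty => exact ⟨fun _ => 1, rfl, fun _ => H.one_mem, hasStrictFDerivAt_const _ _⟩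
    | insert i s hi ih =>
      obtain ⟨Φ, hΦ1, hΦH, hΦ⟩ := ih
      refine ⟨fun X => γ i (coord i X) * Φ X, by simp [hγ1, hΦ1],
        fun X => H.mul_mem (hγH i _) (hΦH X), ?_⟩
      simp only [map_mul]
      refine ((hγi i).mul' hΦ).congr_fderiv ?_
      ext X
      simp [hγ1, hΦ1, Finset.sum_insert hi, add_comm]
  obtain ⟨Φ, hΦ1, hΦH, hΦ⟩ := hprod Finset.univ
  refine ⟨Φ, hΦ1, hΦH, hΦ.congr_fderiv <| ContinuousLinearMap.ext fun X => ?_⟩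
  have hX := congrArg Subtype.val (b.sum_repr X)
  rw [Submodule.coe_sum] at hX
  rw [_root_.sum_apply]
  exact hX

lemma hasStrictFDerivAt_sub_ringInverse [CompleteSpace A] :
    HasStrictFDerivAt (fun a : A => a - Ring.inverse a)
      ((ContinuousLinearEquiv.smulLeft (Units.mk0 (2 : ℝ) two_ne_zero) : A ≃L[ℝ] A) : A →L[ℝ] A)
      1 := by
  refine ((hasStrictFDerivAt_id (1 : A)).sub
    (hasStrictFDerivAt_ringInverse (𝕜 := ℝ) (1 : Aˣ))).congr_fderiv ?_
  ext a
  simp [two_smul, Units.smul_def]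

lemma exists_mem_nhds_injOn_sub_ringInverse [CompleteSpace A] :
    ∃ s ∈ 𝓝 (1 : A), Set.InjOn (fun a => a - Ring.inverse a) s :=
  ⟨_, hasStrictFDerivAt_sub_ringInverse.eventually_left_inverse, fun _ ha _ hb hab =>
    ha.symm.trans ((congrArg _ hab).trans hb)⟩

lemma eventually_exists_sub_inv_eq [FiniteDimensional ℝ A] {τ : Γ →* A} {H : Subgroup Γ}
    (hH : ∀ h ∈ H, τ h - τ h⁻¹ ∈ tangentSpace τ H) {s : Set A} (hs : s ∈ 𝓝 1) :
    ∀ᶠ a in 𝓝 (0 : A), a ∈ tangentSpace τ H → ∃ h ∈ H, τ h ∈ s ∧ τ h - τ h⁻¹ = a := by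
  have : CompleteSpace A := FiniteDimensional.complete ℝ A
  obtain ⟨Φ, hΦ1, hΦH, hΦ⟩ := exists_hasStrictFDerivAt_subtypeL_tangentSpace τ H
  obtain ⟨π, hπ⟩ := (tangentSpace τ H).subtype.exists_leftInverse_of_injective
    (tangentSpace τ H).ker_subtype
  have hπT {a} (ha : a ∈ tangentSpace τ H) : π a = ⟨a, ha⟩ := LinearMap.congr_fun hπ ⟨a, ha⟩
  have hτΦ : τ (Φ 0) = 1 := by rw [hΦ1, map_one]
  let Ψ (X : tangentSpace τ H) : tangentSpace τ H :=
    π.toContinuousLinearMap (τ (Φ X) - Ring.inverse (τ (Φ X)))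
  have hΨ : HasStrictFDerivAt Ψ
      ((ContinuousLinearEquiv.smulLeft (Units.mk0 (2 : ℝ) two_ne_zero) :
        tangentSpace τ H ≃L[ℝ] tangentSpace τ H) : tangentSpace τ H →L[ℝ] tangentSpace τ H) 0 := by
    have hsub := hasStrictFDerivAt_sub_ringInverse (A := A)
    rw [← hτΦ] at hsub
    refine (π.toContinuousLinearMap.hasStrictFDerivAt.comp 0
      (hsub.comp (f := fun X => τ (Φ X)) 0 hΦ)).congr_fderiv <| ContinuousLinearMap.ext fun X => ?_
    exact (map_smul π (2 : ℝ) (X : A)).trans (congrArg _ (hπT X.2))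
  have hΨ0 : Ψ 0 = π 0 := by simp [Ψ, hτΦ]
  have himage : Ψ '' {X | τ (Φ X) ∈ s} ∈ 𝓝 (π 0) := by
    rw [← hΨ0, ← hΨ.map_nhds_eq_of_equiv]
    exact image_mem_map (hΦ.continuousAt.preimage_mem_nhds (by rwa [hτΦ]))
  filter_upwards [π.continuous_of_finiteDimensional.continuousAt himage] with a ⟨X, hX, hΨX⟩ ha
  refine ⟨Φ X, hΦH X, hX, ?_⟩
  have hπX : π (τ (Φ X) - τ (Φ X)⁻¹) = π a := by rw [← hΨX, ← ringInverse_map]; rfl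
  rw [hπT (hH _ (hΦH X)), hπT ha] at hπX
  exact congrArg Subtype.val hπX

theorem eventually_mem_of_sub_inv_mem_tangentSpace [FiniteDimensional ℝ A] [TopologicalSpace Γ]
    {τ : Γ →* A} (hτ : Continuous τ) (hinj : Function.Injective τ) {H S : Subgroup Γ}
    (hHS : H ≤ S) (hS : ∀ g ∈ S, τ g - τ g⁻¹ ∈ tangentSpace τ H) :
    ∀ᶠ g in 𝓝 (1 : Γ), g ∈ S → g ∈ H := by
  have : CompleteSpace A := FiniteDimensional.complete ℝ A
  obtain ⟨s, hs, hinjOn⟩ := exists_mem_nhds_injOn_sub_ringInverse (A := A)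
  have hcover := eventually_exists_sub_inv_eq (fun h hh => hS h (hHS hh)) hs
  have hτ1 : Tendsto τ (𝓝 1) (𝓝 1) := by simpa only [map_one] using hτ.tendsto 1
  have hsub : Tendsto (fun g => τ g - τ g⁻¹) (𝓝 1) (𝓝 0) := by
    simpa only [Function.comp_def, ringInverse_map, Ring.inverse_one, sub_self] using
      (hasStrictFDerivAt_sub_ringInverse (A := A)).continuousAt.tendsto.comp hτ1
  filter_upwards [hsub.eventually hcover, hτ1 hs] with g hg hgs hgS
  obtain ⟨h, hh, hhs, heq⟩ := hg (hS g hgS)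
  simp only [← ringInverse_map] at heq
  exact hinj (hinjOn hhs hgs heq) ▸ hh

end TangentSpace

theorem connectedComponentIn_subset_of_eventually_mem {Γ : Type*} [Group Γ] [TopologicalSpace Γ]
    [IsTopologicalGroup Γ] {H S : Subgroup Γ} (h : ∀ᶠ g in 𝓝 (1 : Γ), g ∈ S → g ∈ H) :
    connectedComponentIn (S : Set Γ) 1 ⊆ H := by
  have hopen : IsOpen (H.subgroupOf S : Set S) := by
    refine Subgroup.isOpen_of_mem_nhds _ (g := 1) ?_
    filter_upwards [continuous_subtype_val.continuousAt.eventually h] with x hx using hx x.2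
  have hclopen : IsClopen (H.subgroupOf S : Set S) := ⟨Subgroup.isClosed_of_isOpen _ hopen, hopen⟩
  rw [connectedComponentIn_eq_image S.one_mem]
  rintro _ ⟨x, hx, rfl⟩
  exact hclopen.connectedComponent_subset (H.subgroupOf S).one_mem hx

section Stabilizers

variable {n : ℕ} {V : Type*} [NormedAddCommGroup V] [NormedSpace ℝ V]

/-- The stabilizer of a vector in a representation of `O(1,n)`. -/
def vecStab (ρ : LorentzGrp n →* (V →L[ℝ] V)) (v : V) : Subgroup (LorentzGrp n) :=
  (MulAction.stabilizer (V →L[ℝ] V)ˣ v).comap ρ.toHomUnits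

/-- The subgroup of `O(1,n)` fixing the orthogonal of `E` pointwise. -/
def fixOrth (E : Submodule ℝ (Fin (n + 1) → ℝ)) : Subgroup (LorentzGrp n) :=
  (fixingSubgroup ((Fin (n + 1) → ℝ) →L[ℝ] (Fin (n + 1) → ℝ))ˣ
    ((lorentzForm n).orthogonal E : Set (Fin (n + 1) → ℝ))).comap (stdRep n).toHomUnits

lemma mem_vecStab {ρ : LorentzGrp n →* (V →L[ℝ] V)} {v : V} {g : LorentzGrp n} :
    g ∈ vecStab ρ v ↔ ρ g v = v := Iff.rfl

lemma mem_fixOrth {E : Submodule ℝ (Fin (n + 1) → ℝ)} {g : LorentzGrp n} :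
    g ∈ fixOrth E ↔ ∀ x ∈ (lorentzForm n).orthogonal E, lorAct g x = x :=
  mem_fixingSubgroup_iff _

variable [NeZero n] {E : Submodule ℝ (Fin (n + 1) → ℝ)} {u u' : Fin (n + 1) → ℝ}

lemma SOIdComp_subset_connectedComponentIn_fixOrth :
    SOIdComp n E ⊆ connectedComponentIn (fixOrth E : Set (LorentzGrp n)) 1 := by
  refine connectedComponentIn_mono 1 fun g hg => mem_fixOrth.2 fun x hx => hg.2 x fun e he => ?_
  rw [← lorentzForm_apply, ← isSymm_lorentzForm.eq]
  exact hx e he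

lemma boost_mem_fixOrth (h : IsHyperbolicPair (lorentzForm n) u u') (hu : u ∈ E) (hu' : u' ∈ E)
    (c : ℝˣ) : boost h c ∈ fixOrth E := by
  refine mem_fixOrth.2 fun x hx => ?_
  have hux : lorentzForm n u x = 0 := hx u hu
  have hu'x : lorentzForm n u' x = 0 := hx u' hu'
  simp [lorAct_boost, boostEnd_apply, hux, hu'x]

lemma hasStrictDerivAt_boost_exp (h : IsHyperbolicPair (lorentzForm n) u u') :
    HasStrictDerivAt (fun t => stdRep n (boost h (Units.mk0 (Real.exp t) (Real.exp_ne_zero t))))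
      (LinearMap.toContinuousLinearMap (wedgeEnd (lorentzForm n) u u')) 0 := by
  let P : (Fin (n + 1) → ℝ) →L[ℝ] (Fin (n + 1) → ℝ) :=
    ((lorentzForm n u').smulRight u).toContinuousLinearMap
  let P' : (Fin (n + 1) → ℝ) →L[ℝ] (Fin (n + 1) → ℝ) :=
    ((lorentzForm n u).smulRight u').toContinuousLinearMap
  have hboost : (fun t => stdRep n (boost h (Units.mk0 (Real.exp t) (Real.exp_ne_zero t)))) =
      fun t => 1 + (Real.exp t - 1) • P + (Real.exp (-t) - 1) • P' := by
    funext t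
    ext1 x
    simp [stdRep_apply, lorAct_boost, boostEnd_apply, P, P', smul_smul, Real.exp_neg]
  have hexp : HasStrictDerivAt (fun t => Real.exp t - 1) 1 0 :=
    HasStrictDerivAt.congr_deriv ((Real.hasStrictDerivAt_exp 0).sub_const 1) Real.exp_zero
  have hexp_neg : HasStrictDerivAt (fun t => Real.exp (-t) - 1) (-1) 0 :=
    HasStrictDerivAt.congr_deriv ((hasStrictDerivAt_id (0 : ℝ)).neg.exp.sub_const 1) (by simp)
  rw [hboost]
  refine (((hexp.smul_const P).const_add 1).add (hexp_neg.smul_const P')).congr_deriv ?_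
  ext1 x
  simp [P, P', wedgeEnd_apply, sub_eq_add_neg]

variable [FiniteDimensional ℝ V] {ρ : LorentzGrp n →* (V →L[ℝ] V)} {G : Set (LorentzGrp n)} {v : V}

lemma wedgeEnd_mem_tangentSpace (hn : 2 ≤ n) (hρ : Continuous ρ) (hv : IsStableVec ρ G v)
    (hu : IsLimitDirection n G u) (hu' : IsLimitDirection n G u') (huE : u ∈ E) (hu'E : u' ∈ E) :
    LinearMap.toContinuousLinearMap (wedgeEnd (lorentzForm n) u u') ∈
      tangentSpace (stdRep n) (vecStab ρ v ⊓ fixOrth E) := by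
  have hnull : lorentzForm n u u = 0 := by rw [lorentzForm_self, hu.2.1]
  have hnull' : lorentzForm n u' u' = 0 := by rw [lorentzForm_self, hu'.2.1]
  by_cases huu' : lorentzForm n u u' = 0
  · rw [wedgeEnd_eq_zero_of_null isPosDefOrthogonalTo_basePt isSymm_lorentzForm hnull hnull' huu']
    exact Submodule.zero_mem _
  set β := lorentzForm n u u'
  have h : IsHyperbolicPair (lorentzForm n) u (β⁻¹ • u') :=
    ⟨hnull, by simp [hnull'], by simp [β, huu']⟩
  have hmem : LinearMap.toContinuousLinearMap (wedgeEnd (lorentzForm n) u (β⁻¹ • u')) ∈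
      tangentSpace (stdRep n) (vecStab ρ v ⊓ fixOrth E) := by
    refine ⟨_, ?_, fun t => ⟨mem_vecStab.2 ?_, ?_⟩, hasStrictDerivAt_boost_exp h⟩
    · simp [Real.exp_zero]
    · exact map_boost_apply_eq_self hn hρ h hu (hu'.smul (inv_ne_zero huu')) hv (Real.exp_pos t)
    · exact boost_mem_fixOrth h huE (E.smul_mem _ hu'E) _
  simpa [smul_smul, huu'] using Submodule.smul_mem _ β hmem

lemma isSkewAdjoint_stdRep_sub_inv (g : LorentzGrp n) :
    (lorentzForm n).IsSkewAdjoint (stdRep n g - stdRep n g⁻¹) := by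
  intro x y
  have hinv (g : LorentzGrp n) :
      lorentzForm n (lorAct g x) y = lorentzForm n x (lorAct g⁻¹ y) := by
    rw [← lorentzForm_lorAct g x, ← lorAct_mul, mul_inv_cancel, lorAct_one]
  simp [stdRep_apply, hinv]

lemma sub_inv_mem_tangentSpace (hn : 2 ≤ n) (hρ : Continuous ρ) (hv : IsStableVec ρ G v)
    (hE : E = Submodule.span ℝ {u | IsLimitDirection n G u}) {g : LorentzGrp n}
    (hg : g ∈ fixOrth E) :
    stdRep n g - stdRep n g⁻¹ ∈ tangentSpace (stdRep n) (vecStab ρ v ⊓ fixOrth E) := by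
  have hker : (lorentzForm n).orthogonal E ≤
      LinearMap.ker (stdRep n g - stdRep n g⁻¹).toLinearMap := by
    intro x hx
    have hgx := mem_fixOrth.1 hg x hx
    have hginv := mem_fixOrth.1 (inv_mem hg) x hx
    simp [stdRep_apply, hgx, hginv]
  have hwedge : Submodule.map₂ (wedgeEnd (lorentzForm n)) E E ≤
      (tangentSpace (stdRep n) (vecStab ρ v ⊓ fixOrth E)).comap
        LinearMap.toContinuousLinearMap.toLinearMap := by
    conv_lhs => rw [hE]
    rw [Submodule.map₂_span_span, Submodule.span_le]
    rintro - ⟨u, hu, u', hu', rfl⟩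
    exact wedgeEnd_mem_tangentSpace hn hρ hv hu hu' (hE ▸ Submodule.subset_span hu)
      (hE ▸ Submodule.subset_span hu')
  exact hwedge (mem_map₂_wedgeEnd_of_isSkewAdjoint isSymm_lorentzForm nondegenerate_lorentzForm
    (isSkewAdjoint_stdRep_sub_inv g) hker)

end Stabilizers

theorem stable_vector_fixed_by_SO_of_limitSpan_general
    (n : ℕ) (hn : 2 ≤ n)
    (V : Type*) [NormedAddCommGroup V] [NormedSpace ℝ V] [FiniteDimensional ℝ V]
    (ρ : LorentzGrp n →* (V →L[ℝ] V)) (hρ : Continuous fun g => ρ g)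
    (G : Set (LorentzGrp n))
    (E : Submodule ℝ (Fin (n + 1) → ℝ))
    (hE : E = Submodule.span ℝ {u | IsLimitDirection n G u})
    (v₀ : V) (hv₀ : IsStableVec ρ G v₀) :
    ∀ g ∈ SOIdComp n E, ρ g v₀ = v₀ := by
  have : NeZero n := ⟨by omega⟩
  have hnhds : ∀ᶠ g in 𝓝 (1 : LorentzGrp n), g ∈ fixOrth E → g ∈ vecStab ρ v₀ ⊓ fixOrth E :=
    eventually_mem_of_sub_inv_mem_tangentSpace isEmbedding_stdRep.continuous
      isEmbedding_stdRep.injective inf_le_right fun _ => sub_inv_mem_tangentSpace hn hρ hv₀ hE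
  intro g hg
  have hgH := connectedComponentIn_subset_of_eventually_mem hnhds
    (SOIdComp_subset_connectedComponentIn_fixOrth hg)
  exact mem_vecStab.1 hgH.1

/-- Let `n ≥ 2` and let `ρ` be a continuous representation of `O(1,n)` on a
finite-dimensional real normed vector space `V`. Let `𝒢 ⊆ O(1,n)`, let `E` be the linear span of
the limit directions of `𝒢`, and assume `dim E ≥ 3`. Then every vector `v₀` stable under `𝒢`
is fixed by `SO°(E)`. -/
theorem stable_vector_fixed_by_SO_of_limitSpan
    (n : ℕ) (hn : 2 ≤ n)
    (V : Type*) [NormedAddCommGroup V] [NormedSpace ℝ V] [FiniteDimensional ℝ V]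
    (ρ : LorentzGrp n →* (V →L[ℝ] V)) (hρ : Continuous fun g => ρ g)
    (G : Set (LorentzGrp n))
    (E : Submodule ℝ (Fin (n + 1) → ℝ))
    (hE : E = Submodule.span ℝ {u | IsLimitDirection n G u})
    (hdim : 3 ≤ Module.finrank ℝ E)
    (v₀ : V) (hv₀ : IsStableVec ρ G v₀) :
    ∀ g ∈ SOIdComp n E, ρ g v₀ = v₀ :=
  stable_vector_fixed_by_SO_of_limitSpan_general n hn V ρ hρ G E hE v₀ hv₀
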